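/- arXiv:1511.07579 — 3 statements merged into one kernel-verified Lean document; each statement's English description precedes it below -/
import Mathlib

section
/- The real-linear map A₀ : ℍ₀ → M₂(𝒜) sending p = p₀1 + ip₁I + p₂J + ip₃K (p₀,…,p₃ ∈ 𝒜) to the matrix [[p₀ − σp₁, p₂ − σp₃], [−p₂ − σp₃, p₀ + σp₁]] is an isomorphism of real algebras, and for every p ∈ ℍ₀ one has H(p, p) = det A₀(p) and A₀(\widehat{p̄}) = A₀(p)*, where p̄ denotes quaternionic conjugation and B* denotes the conjugate transpose of B ∈ M₂(𝒜). -/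
noncomputable section

/-! ### The algebra `𝒜` of Lorentz (split-complex) numbers.

We realize `𝒜` (the real algebra with basis `{1, σ}`, `σ² = 1`) in split coordinates:
`(x, y) : ℝ × ℝ` represents `u + σ v` with `x = u + v`, `y = u - v`.  Multiplication is then
componentwise, `1 = (1,1)`, and `σ = (1, -1)` satisfies `σ² = 1`. -/

abbrev LorentzA : Type := ℝ × ℝ

/-- The element `σ ∈ 𝒜`, with `σ² = 1`, `σ ∉ ℝ·1`. -/
def sA : LorentzA := (1, -1)

/-- The element `u + σ v` of `𝒜`. -/
def mkA (u v : ℝ) : LorentzA := (u + v, u - v)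

/-- The inclusion `ℝ ⊆ 𝒜`, `t ↦ t·1`. -/
def toA (t : ℝ) : LorentzA := (t, t)

/-- Conjugation of `𝒜`: `u + σ v ↦ u - σ v` (the swap, in split coordinates). -/
def conjA (a : LorentzA) : LorentzA := (a.2, a.1)

/-- `|a|² := a·â = u² - v²`, as a real number (so that `a * conjA a = toA (nsqA a)`). -/
def nsqA (a : LorentzA) : ℝ := a.1 * a.2

/-- The real part of `a = u + σ v ∈ 𝒜`, namely `u`. -/
def ReA (a : LorentzA) : ℝ := (a.1 + a.2) / 2

/-- The imaginary part of `a = u + σ v ∈ 𝒜`, namely `v`. -/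
def ImA (a : LorentzA) : ℝ := (a.1 - a.2) / 2

/-- The idempotent `(1 + σ)/2` of `𝒜`. -/
def eP : LorentzA := (1 + sA) / 2

/-- The idempotent `(1 - σ)/2` of `𝒜`. -/
def eM : LorentzA := (1 - sA) / 2

/-! ### Derivatives of maps `ℝ² → 𝒜` and `ℝ² → ℝ`. -/

/-- `∂_u f`. -/
def duA (f : ℝ × ℝ → LorentzA) (x : ℝ × ℝ) : LorentzA := fderiv ℝ f x (1, 0)

/-- `∂_v f`. -/
def dvA (f : ℝ × ℝ → LorentzA) (x : ℝ × ℝ) : LorentzA := fderiv ℝ f x (0, 1)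

/-- `∂_a f = ½ (∂_u f + σ ∂_v f)`. -/
def Da (f : ℝ × ℝ → LorentzA) (x : ℝ × ℝ) : LorentzA := ((2:ℝ)⁻¹) • (duA f x + sA * dvA f x)

/-- `∂_â f = ½ (∂_u f - σ ∂_v f)`.  A map is conformal iff `∂_â f = 0`. -/
def Dahat (f : ℝ × ℝ → LorentzA) (x : ℝ × ℝ) : LorentzA := ((2:ℝ)⁻¹) • (duA f x - sA * dvA f x)

/-- `∂_u f` for real-valued `f`. -/
def duR (f : ℝ × ℝ → ℝ) (x : ℝ × ℝ) : ℝ := fderiv ℝ f x (1, 0)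

/-- `∂_v f` for real-valued `f`. -/
def dvR (f : ℝ × ℝ → ℝ) (x : ℝ × ℝ) : ℝ := fderiv ℝ f x (0, 1)

/-- `∂²f/∂u²`. -/
def duuR (f : ℝ × ℝ → ℝ) (x : ℝ × ℝ) : ℝ := fderiv ℝ (fun y => fderiv ℝ f y (1, 0)) x (1, 0)

/-- `∂²f/∂v²`. -/
def dvvR (f : ℝ × ℝ → ℝ) (x : ℝ × ℝ) : ℝ := fderiv ℝ (fun y => fderiv ℝ f y (0, 1)) x (0, 1)

/-- The wave operator `□ f = -∂²f/∂u² + ∂²f/∂v²`. -/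
def boxR (f : ℝ × ℝ → ℝ) (x : ℝ × ℝ) : ℝ := -duuR f x + dvvR f x

/-! ### 2×2 matrices over `𝒜`. -/

abbrev M2A := Matrix (Fin 2) (Fin 2) LorentzA

/-- The conjugate transpose `B*` of `B ∈ M₂(𝒜)`. -/
def ctrans (B : M2A) : M2A := (B.map conjA).transpose

/-- `Herm₂(𝒜) = {B ∈ M₂(𝒜) : B = B*}`. -/
def Herm2 : Set M2A := {B | B = ctrans B}

/-- `SL₂(𝒜) = {B ∈ M₂(𝒜) : det B = 1}`. -/
def SL2A : Set M2A := {B | B.det = 1}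

/-- The inclusion `M₂(ℝ) ⊆ M₂(𝒜)`. -/
def mR (C : Matrix (Fin 2) (Fin 2) ℝ) : M2A := C.map toA

/-! ### The complexified Lorentz numbers `𝒜_ℂ = 𝒜 ⊗ ℂ ≅ ℂ × ℂ` (split coordinates),
and the quaternions `ℍ^{𝒜_ℂ}` with coefficients in `𝒜_ℂ`. -/

abbrev AC : Type := ℂ × ℂ

/-- `σ ∈ 𝒜_ℂ`. -/
def sC : AC := (1, -1)

/-- The complex unit `i ∈ 𝒜_ℂ`. -/
def iC : AC := (Complex.I, Complex.I)

/-- Conjugation `u + σ v ↦ u - σ v` (`u, v ∈ ℂ`) of `𝒜_ℂ`. -/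
def hatC (z : AC) : AC := (z.2, z.1)

/-- The inclusion `ℝ ⊆ 𝒜_ℂ`. -/
def rc (t : ℝ) : AC := ((t : ℂ), (t : ℂ))

/-- The inclusion `𝒜 ⊆ 𝒜_ℂ`. -/
def toAC (a : LorentzA) : AC := ((a.1 : ℂ), (a.2 : ℂ))

/-- `a ↦ i·a`, the image of `𝒜` in `i·𝒜 ⊆ 𝒜_ℂ`. -/
def iAC (a : LorentzA) : AC := (Complex.I * a.1, Complex.I * a.2)

/-- `ℍ^{𝒜_ℂ}`: quaternions `ζ₀·1 + ζ₁·I + ζ₂·J + ζ₃·K` with `ζᵢ ∈ 𝒜_ℂ`,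
`I² = J² = K² = -1`, `IJ = -JI = K`. -/
abbrev HAC := Quaternion AC

/-- The scalar quaternion `z·1`. -/
def qscalar (z : AC) : HAC := ⟨z, 0, 0, 0⟩

/-- The quaternion unit `I`. -/
def qI : HAC := ⟨0, 1, 0, 0⟩

/-- The quaternion unit `J`. -/
def qJ : HAC := ⟨0, 0, 1, 0⟩

/-- The quaternion unit `K`. -/
def qK : HAC := ⟨0, 0, 0, 1⟩

/-- `ζ̂`: apply `𝒜_ℂ`-conjugation to each coefficient of a quaternion.
(Quaternionic conjugation `ζ̄` is `star ζ`.) -/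
def qhat (q : HAC) : HAC := ⟨hatC q.re, hatC q.imI, hatC q.imJ, hatC q.imK⟩

/-- `H(ζ, ζ') = ½(ζ ζ̄' + ζ' ζ̄) = ζ₀ζ₀' + ζ₁ζ₁' + ζ₂ζ₂' + ζ₃ζ₃' ∈ 𝒜_ℂ`. -/
def Hform (q q' : HAC) : AC := q.re * q'.re + q.imI * q'.imI + q.imJ * q'.imJ + q.imK * q'.imK

/-- `p₀·1 + i p₁·I + p₂·J + i p₃·K` with `pᵢ ∈ 𝒜`: the generic element of `ℍ₀`. -/
def mk0 (p₀ p₁ p₂ p₃ : LorentzA) : HAC :=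
  qscalar (toAC p₀) + qscalar (iAC p₁) * qI + qscalar (toAC p₂) * qJ + qscalar (iAC p₃) * qK

/-- `i q₀·1 + q₁·I + i q₂·J + q₃·K` with `qᵢ ∈ 𝒜`: the generic element of `ℍ₁`. -/
def mk1 (q₀ q₁ q₂ q₃ : LorentzA) : HAC :=
  qscalar (iAC q₀) + qscalar (toAC q₁) * qI + qscalar (iAC q₂) * qJ + qscalar (toAC q₃) * qK

/-- `ℍ₀ = {p₀·1 + i p₁·I + p₂·J + i p₃·K : pᵢ ∈ 𝒜} ⊆ ℍ^{𝒜_ℂ}`. -/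
def H0set : Set HAC := {ζ | ∃ p₀ p₁ p₂ p₃ : LorentzA, ζ = mk0 p₀ p₁ p₂ p₃}

/-- `ℍ₁ = {i q₀·1 + q₁·I + i q₂·J + q₃·K : qᵢ ∈ 𝒜} ⊆ ℍ^{𝒜_ℂ}`. -/
def H1set : Set HAC := {ζ | ∃ q₀ q₁ q₂ q₃ : LorentzA, ζ = mk1 q₀ q₁ q₂ q₃}

/-- `Spin(2,2) = {p ∈ ℍ₀ : H(p,p) = 1}`. -/
def SpinSet : Set HAC := {p | p ∈ H0set ∧ Hform p p = 1}

/-- Extraction of the `𝒜`-coefficient of an element of `𝒜 ⊆ 𝒜_ℂ`. -/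
def reEx (z : AC) : LorentzA := (z.1.re, z.2.re)

/-- Extraction of the `𝒜`-coefficient of an element of `i·𝒜 ⊆ 𝒜_ℂ`. -/
def imEx (z : AC) : LorentzA := (z.1.im, z.2.im)

/-- The map `A₀ : ℍ₀ → M₂(𝒜)`,
`p₀·1 + i p₁·I + p₂·J + i p₃·K ↦ [[p₀ - σp₁, p₂ - σp₃], [-p₂ - σp₃, p₀ + σp₁]]`
(written via coefficient extraction, so that it is a total function on `ℍ^{𝒜_ℂ}`
agreeing with `A₀` on `ℍ₀`). -/
def A0 (ζ : HAC) : M2A :=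
  !![reEx ζ.re - sA * imEx ζ.imI, reEx ζ.imJ - sA * imEx ζ.imK;
     -reEx ζ.imJ - sA * imEx ζ.imK, reEx ζ.re + sA * imEx ζ.imI]

/-- The map `A₁ : ℍ₁ → M₂(𝒜)`,
`i q₀·1 + q₁·I + i q₂·J + q₃·K ↦ [[-q₁ - σq₀, -q₃ - σq₂], [-q₃ + σq₂, q₁ - σq₀]]`. -/
def A1 (ζ : HAC) : M2A :=
  !![-reEx ζ.imI - sA * imEx ζ.re, -reEx ζ.imK - sA * imEx ζ.imJ;
     -reEx ζ.imK + sA * imEx ζ.imJ, reEx ζ.imI - sA * imEx ζ.re]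

/-!
With `I' = iI` and `K' = iK` one has `I'² = 1`, `J² = -1`, `I'J = -JI' = K'`, so `ℍ₀` is a copy of
the quaternion algebra `(1, -1)` over `𝒜`. Since `σ² = 1`, the matrices `diag(-σ, σ)` and
`[[0, 1], [-1, 0]]` satisfy the same relations, and `A₀` is the induced representation. It is
bijective because `2` and `σ` are invertible, so that the sums and differences of the matrix entries
recover the coefficients of the quaternion. The quaternionic norm form is the determinant of the
representation. Finally, `p ↦ p̄` negates `p₁`, `p₂` and `p₃`: on `p₁` and `p₃` this is the
effect of `σ̂ = -σ`, on `p₂` that of transposition.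
-/

section QuaternionRepresentations

open scoped Quaternion

variable {R : Type*} [CommRing R] {a : R}

/-- The quaternionic basis `i = diag(-s, s)`, `j = [[0, 1], [-1, 0]]` of the `2 × 2` matrices, which
splits the quaternion algebra `(s², -1)`. -/
def splitBasis {s : R} (hs : s * s = a) :
    QuaternionAlgebra.Basis (Matrix (Fin 2) (Fin 2) R) a 0 (-1) where
  i := !![-s, 0; 0, s]
  j := !![0, 1; -1, 0]
  k := !![0, -s; -s, 0]
  i_mul_i := by simp [Matrix.one_fin_two, hs]
  j_mul_j := by simp [Matrix.one_fin_two]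
  i_mul_j := by simp
  j_mul_i := by simp

/-- The two-dimensional representation of the quaternion algebra `(s², -1)`. -/
def splitHom {s : R} (hs : s * s = a) : ℍ[R,a,0,-1] →ₐ[R] Matrix (Fin 2) (Fin 2) R :=
  (splitBasis hs).liftHom

theorem splitHom_apply {s : R} (hs : s * s = a) (x : ℍ[R,a,0,-1]) :
    splitHom hs x =
      !![x.re - s * x.imI, x.imJ - s * x.imK; -x.imJ - s * x.imK, x.re + s * x.imI] := by
  ext i j
  fin_cases i <;> fin_cases j <;>
    simp [splitHom, splitBasis, QuaternionAlgebra.Basis.lift, Matrix.algebraMap_matrix_apply] <;>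
    ring

theorem det_splitHom {s : R} (hs : s * s = a) (x : ℍ[R,a,0,-1]) :
    (splitHom hs x).det = x.re ^ 2 - a * x.imI ^ 2 + x.imJ ^ 2 - a * x.imK ^ 2 := by
  rw [splitHom_apply, Matrix.det_fin_two_of]
  linear_combination (-x.imI ^ 2 - x.imK ^ 2) * hs

theorem splitHom_bijective {s : R} (hs : s * s = a) (h2 : IsUnit (2 : R)) (hu : IsUnit s) :
    Function.Bijective (splitHom hs) := by
  obtain ⟨t, ht⟩ := h2.exists_right_inv
  obtain ⟨u, hu⟩ := hu.exists_right_inv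
  let inverse (B : Matrix (Fin 2) (Fin 2) R) : ℍ[R,a,0,-1] :=
    ⟨t * (B 0 0 + B 1 1), t * u * (B 1 1 - B 0 0), t * (B 0 1 - B 1 0), -t * u * (B 0 1 + B 1 0)⟩
  refine Function.bijective_iff_has_inverse.mpr ⟨inverse, fun x ↦ ?_, fun B ↦ ?_⟩
  · simp only [inverse, splitHom_apply]
    ext <;> simp <;> grind
  · simp only [inverse, splitHom_apply]
    ext i j
    fin_cases i <;> fin_cases j <;> simp <;> grind

/-- The quaternionic basis `(c • i, j, c • k)` over `R` obtained from a quaternionic basis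
`(i, j, k)` over an `R`-algebra `S`. It passes from the quaternion algebra `(a', b')` over `S` to
the quaternion algebra `(c² a', b')` over `R`. -/
def twistedBasis {S A : Type*} [CommRing S] [Algebra R S] [Ring A] [Algebra R A] [Algebra S A]
    [IsScalarTower R S A] {b : R} {a' b' c : S} (B : QuaternionAlgebra.Basis A a' 0 b')
    (ha : algebraMap R S a = c * c * a') (hb : algebraMap R S b = b') :
    QuaternionAlgebra.Basis A a 0 b where
  i := c • B.i
  j := B.j
  k := c • B.k
  i_mul_i := by simp [← algebraMap_smul S a, ha, smul_smul, mul_assoc]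
  j_mul_j := by simp [← algebraMap_smul S b, hb]
  i_mul_j := by simp
  j_mul_i := by simp

end QuaternionRepresentations

section LorentzQuaternions

open scoped Quaternion

/-- `𝒜_ℂ` as an `𝒜`-algebra through the inclusion `toAC`. -/
instance : Algebra LorentzA AC :=
  (RingHom.prodMap Complex.ofRealHom Complex.ofRealHom).toAlgebra

instance : IsScalarTower ℝ LorentzA AC :=
  .of_algebraMap_eq fun _ ↦ rfl

theorem algebraMap_eq_toAC (p : LorentzA) : algebraMap LorentzA AC p = toAC p :=
  rfl

theorem iAC_eq_mul (p : LorentzA) : iAC p = iC * toAC p :=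
  rfl

theorem iC_mul_self : iC * iC = -1 := by
  ext1 <;> simp [iC]

theorem sA_mul_self : sA * sA = 1 := by
  ext <;> simp [sA]

/-- The standard quaternionic basis `I, J, K` of `ℍ^{𝒜_ℂ}` over `𝒜_ℂ`. -/
def HACbasis : QuaternionAlgebra.Basis HAC (-1 : AC) 0 (-1) :=
  QuaternionAlgebra.Basis.self AC (c₁ := -1) (c₂ := 0) (c₃ := -1)

/-- The quaternionic basis `iI, J, iK` of `ℍ₀` over `𝒜`. -/
def H0basis : QuaternionAlgebra.Basis HAC (1 : LorentzA) 0 (-1) :=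
  twistedBasis (c := iC) HACbasis (by simp [iC_mul_self]) (by simp)

/-- The embedding of the quaternion algebra `(1, -1)` over `𝒜` into `ℍ^{𝒜_ℂ}` with image `ℍ₀`. -/
def H0hom : ℍ[LorentzA,1,0,-1] →ₐ[LorentzA] HAC :=
  H0basis.liftHom

theorem qscalar_eq_algebraMap (z : AC) : qscalar z = algebraMap AC HAC z :=
  rfl

theorem H0hom_apply (x : ℍ[LorentzA,1,0,-1]) : H0hom x = mk0 x.re x.imI x.imJ x.imK := by
  have hI : H0basis.i = iC • qI := rfl
  have hJ : H0basis.j = qJ := rfl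
  have hK : H0basis.k = iC • qK := rfl
  simp only [H0hom, QuaternionAlgebra.Basis.liftHom_apply, QuaternionAlgebra.Basis.lift, hI, hJ, hK,
    mk0, qscalar_eq_algebraMap, ← Algebra.smul_def, iAC_eq_mul, mul_comm iC,
    ← algebraMap_eq_toAC, ← IsScalarTower.algebraMap_apply, smul_assoc]

theorem H0set_eq_range : H0set = Set.range H0hom := by
  ext ζ
  constructor
  · rintro ⟨p₀, p₁, p₂, p₃, rfl⟩
    exact ⟨⟨p₀, p₁, p₂, p₃⟩, H0hom_apply _⟩
  · rintro ⟨x, rfl⟩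
    exact ⟨_, _, _, _, H0hom_apply x⟩

theorem mk0_eq (p₀ p₁ p₂ p₃ : LorentzA) :
    mk0 p₀ p₁ p₂ p₃ = ⟨toAC p₀, iAC p₁, toAC p₂, iAC p₃⟩ := by
  -- `Quaternion` is not reducible, and `simp` multiplies tuples in `QuaternionAlgebra` only.
  suffices (⟨toAC p₀, 0, 0, 0⟩ + ⟨iAC p₁, 0, 0, 0⟩ * ⟨0, 1, 0, 0⟩ +
      ⟨toAC p₂, 0, 0, 0⟩ * ⟨0, 0, 1, 0⟩ + ⟨iAC p₃, 0, 0, 0⟩ * ⟨0, 0, 0, 1⟩ : ℍ[AC,-1,0,-1]) =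
      ⟨toAC p₀, iAC p₁, toAC p₂, iAC p₃⟩ from this
  ext1 <;> simp

theorem A0_mk0 (p₀ p₁ p₂ p₃ : LorentzA) :
    A0 (mk0 p₀ p₁ p₂ p₃) = !![p₀ - sA * p₁, p₂ - sA * p₃; -p₂ - sA * p₃, p₀ + sA * p₁] := by
  simp [mk0_eq, A0, reEx, imEx, toAC, iAC]

theorem A0_H0hom (x : ℍ[LorentzA,1,0,-1]) : A0 (H0hom x) = splitHom sA_mul_self x := by
  rw [H0hom_apply, A0_mk0, splitHom_apply]

theorem A0_comp_H0hom_bijective : Function.Bijective (A0 ∘ H0hom) := by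
  have h2 : IsUnit (2 : LorentzA) := Prod.isUnit_iff.mpr ⟨by simp, by simp⟩
  rw [show A0 ∘ H0hom = splitHom sA_mul_self from funext A0_H0hom]
  exact splitHom_bijective sA_mul_self h2 (.of_mul_eq_one _ sA_mul_self)

theorem bijOn_A0_range_H0hom : Set.BijOn A0 (Set.range H0hom) Set.univ :=
  ⟨Set.mapsTo_univ _ _, A0_comp_H0hom_bijective.injective.injOn_range, by
    rw [Set.SurjOn, ← Set.range_comp, A0_comp_H0hom_bijective.surjective.range_eq]⟩

theorem Hform_mk0_self (p₀ p₁ p₂ p₃ : LorentzA) :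
    Hform (mk0 p₀ p₁ p₂ p₃) (mk0 p₀ p₁ p₂ p₃) = toAC (p₀ ^ 2 - p₁ ^ 2 + p₂ ^ 2 - p₃ ^ 2) := by
  simp only [mk0_eq, Hform, iAC_eq_mul, ← algebraMap_eq_toAC, map_add, map_sub, map_pow]
  linear_combination
    (algebraMap LorentzA AC p₁ ^ 2 + algebraMap LorentzA AC p₃ ^ 2) * iC_mul_self

theorem toAC_det_A0_H0hom (x : ℍ[LorentzA,1,0,-1]) :
    toAC (A0 (H0hom x)).det = Hform (H0hom x) (H0hom x) := by
  rw [A0_H0hom, det_splitHom, H0hom_apply, Hform_mk0_self, one_mul, one_mul]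

theorem A0_qhat_star (ζ : HAC) : A0 (qhat (star ζ)) = ctrans (A0 ζ) := by
  ext i j <;> fin_cases i <;> fin_cases j <;>
    simp [A0, qhat, ctrans, reEx, imEx, hatC, conjA, sA]

end LorentzQuaternions

/-- `A₀ : ℍ₀ → M₂(𝒜)`,
`p₀·1 + ip₁·I + p₂·J + ip₃·K ↦ [[p₀ - σp₁, p₂ - σp₃], [-p₂ - σp₃, p₀ + σp₁]]`,
is an isomorphism of real algebras (additive, multiplicative, unital, `ℝ`-homogeneous and a
bijection from `ℍ₀` onto `M₂(𝒜)`), and for every `p ∈ ℍ₀` one has `H(p,p) = det A₀(p)` and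
`A₀(hat (p̄)) = A₀(p)*`. -/
theorem stmt2 :
    (∀ p₀ p₁ p₂ p₃ : LorentzA, A0 (mk0 p₀ p₁ p₂ p₃) =
      !![p₀ - sA * p₁, p₂ - sA * p₃; -p₂ - sA * p₃, p₀ + sA * p₁]) ∧
    (∀ p ∈ H0set, ∀ q ∈ H0set, A0 (p + q) = A0 p + A0 q ∧ A0 (p * q) = A0 p * A0 q) ∧
    (∀ (r : ℝ), ∀ p ∈ H0set, A0 (r • p) = r • A0 p) ∧
    A0 1 = 1 ∧
    Set.BijOn A0 H0set Set.univ ∧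
    (∀ p ∈ H0set, toAC ((A0 p).det) = Hform p p ∧ A0 (qhat (star p)) = ctrans (A0 p)) := by
  rw [H0set_eq_range]
  simp only [Set.forall_mem_range]
  refine ⟨A0_mk0, fun x y ↦ ⟨?_, ?_⟩, fun r x ↦ ?_, ?_, bijOn_A0_range_H0hom,
    fun x ↦ ⟨toAC_det_A0_H0hom x, A0_qhat_star _⟩⟩
  · simp only [A0_H0hom, ← map_add]
  · simp only [A0_H0hom, ← map_mul]
  · simp only [A0_H0hom, ← AlgHom.map_smul_of_tower]
  · rw [← map_one H0hom, A0_H0hom, map_one]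
end
end

section
/- The set {C ∈ Herm₂(𝒜) : det C = −1} equals {B·diag(−1, 1)·B* : B ∈ SL₂(𝒜)}. (Under the identification of ℝ^{2,2} with (Herm₂(𝒜), −det), this set is the pseudo-sphere 𝕊^{1,2} = {x : ⟨x,x⟩ = 1}.) -/
noncomputable section

/-! In split coordinates `Mₙ(R × R) = Mₙ(R) × Mₙ(R)`, and the involution `B ↦ B*` becomes
`(B₁, B₂) ↦ (B₂ᵀ, B₁ᵀ)`.  A Hermitian matrix is therefore a pair `(X, Xᵀ)`; for
`D = (D₁, D₁ᵀ)`, the first component of `B D B*` is `B₁ D₁ B₂ᵀ`, where `B₁, B₂ ∈ SLₙ(R)` are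
independent.  If `D₁` is invertible, `B₁ = X D₁⁻¹` and `B₂ = 1` reach any `X` of the same
determinant. -/

section PairMatrix

open scoped Matrix

variable {l m n R S : Type*}

/-- The matrix over `R × S` whose two components are `X` and `Y`, i.e. the isomorphism
`Mₘₙ(R) × Mₘₙ(S) ≅ Mₘₙ(R × S)`. -/
def pairMatrix (X : Matrix m n R) (Y : Matrix m n S) : Matrix m n (R × S) :=
  Matrix.of fun i j => (X i j, Y i j)

/-- The conjugate transpose `B*` for the swap involution of `R × R`.  This is not Mathlib's
`Matrix.conjTranspose`, because `star` on a product type acts componentwise. -/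
def swapTranspose (B : Matrix m n (R × R)) : Matrix n m (R × R) :=
  (B.map Prod.swap)ᵀ

theorem pairMatrix_map_fst_map_snd (B : Matrix m n (R × S)) :
    pairMatrix (B.map Prod.fst) (B.map Prod.snd) = B :=
  rfl

theorem swapTranspose_pairMatrix (X Y : Matrix m n R) :
    swapTranspose (pairMatrix X Y) = pairMatrix Yᵀ Xᵀ :=
  rfl

theorem eq_swapTranspose_iff_exists_pairMatrix {C : Matrix n n (R × R)} :
    C = swapTranspose C ↔ ∃ X : Matrix n n R, C = pairMatrix X Xᵀ := by
  constructor
  · intro hC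
    have hsnd : C.map Prod.snd = (C.map Prod.fst)ᵀ := congrArg (·.map Prod.snd) hC
    exact ⟨C.map Prod.fst, by rw [← hsnd, pairMatrix_map_fst_map_snd]⟩
  · rintro ⟨X, rfl⟩
    rw [swapTranspose_pairMatrix, Matrix.transpose_transpose]

theorem pairMatrix_mul_pairMatrix [Fintype m] [NonUnitalNonAssocSemiring R]
    [NonUnitalNonAssocSemiring S] (X : Matrix l m R) (Y : Matrix l m S)
    (X' : Matrix m n R) (Y' : Matrix m n S) :
    pairMatrix X Y * pairMatrix X' Y' = pairMatrix (X * X') (Y * Y') := by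
  ext i j <;> simp [pairMatrix, Matrix.mul_apply, Prod.fst_sum, Prod.snd_sum]

theorem pairMatrix_mul_mul_swapTranspose [Fintype n] [NonUnitalCommSemiring R]
    (B₁ B₂ : Matrix m n R) (X : Matrix n n R) :
    pairMatrix B₁ B₂ * pairMatrix X Xᵀ * swapTranspose (pairMatrix B₁ B₂) =
      pairMatrix (B₁ * X * B₂ᵀ) (B₁ * X * B₂ᵀ)ᵀ := by
  simp only [swapTranspose_pairMatrix, pairMatrix_mul_pairMatrix, Matrix.transpose_mul,
    Matrix.transpose_transpose, Matrix.mul_assoc]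

theorem mul_mul_swapTranspose_eq_swapTranspose [Fintype n] [NonUnitalCommSemiring R]
    {D : Matrix n n (R × R)} (hD : D = swapTranspose D) (B : Matrix m n (R × R)) :
    B * D * swapTranspose B = swapTranspose (B * D * swapTranspose B) := by
  obtain ⟨X, rfl⟩ := eq_swapTranspose_iff_exists_pairMatrix.mp hD
  rw [← pairMatrix_map_fst_map_snd B]
  exact eq_swapTranspose_iff_exists_pairMatrix.mpr ⟨_, pairMatrix_mul_mul_swapTranspose ..⟩

variable [Fintype n] [DecidableEq n] [CommRing R]

theorem det_pairMatrix [CommRing S] (X : Matrix n n R) (Y : Matrix n n S) :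
    (pairMatrix X Y).det = (X.det, Y.det) :=
  Prod.ext ((RingHom.fst R S).map_det _) ((RingHom.snd R S).map_det _)

theorem det_swapTranspose (B : Matrix n n (R × R)) : (swapTranspose B).det = B.det.swap := by
  rw [← pairMatrix_map_fst_map_snd B, swapTranspose_pairMatrix, det_pairMatrix, det_pairMatrix,
    Matrix.det_transpose, Matrix.det_transpose, Prod.swap_prod_mk]

theorem det_mul_mul_swapTranspose_of_det_eq_one {B : Matrix n n (R × R)} (hB : B.det = 1)
    (D : Matrix n n (R × R)) :
    (B * D * swapTranspose B).det = D.det := by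
  rw [Matrix.det_mul, Matrix.det_mul, det_swapTranspose, hB, Prod.swap_one, one_mul, mul_one]

theorem exists_det_eq_one_and_eq_mul_mul_swapTranspose {C D : Matrix n n (R × R)}
    (hC : C = swapTranspose C) (hD : D = swapTranspose D) (hunit : IsUnit D.det)
    (hdet : C.det = D.det) :
    ∃ B : Matrix n n (R × R), B.det = 1 ∧ C = B * D * swapTranspose B := by
  obtain ⟨X, rfl⟩ := eq_swapTranspose_iff_exists_pairMatrix.mp hC
  obtain ⟨Y, rfl⟩ := eq_swapTranspose_iff_exists_pairMatrix.mp hD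
  rw [det_pairMatrix] at hunit
  rw [det_pairMatrix, det_pairMatrix] at hdet
  have hY : IsUnit Y.det := (Prod.isUnit_iff.mp hunit).1
  have hXY : X.det = Y.det := congrArg Prod.fst hdet
  refine ⟨pairMatrix (X * Y⁻¹) 1, ?_, ?_⟩
  · rw [det_pairMatrix, Matrix.det_mul, hXY, ← Matrix.det_mul, Matrix.mul_nonsing_inv _ hY,
      Matrix.det_one, Prod.mk_one_one]
  · rw [pairMatrix_mul_mul_swapTranspose, Matrix.transpose_one, Matrix.mul_one,
      Matrix.nonsing_inv_mul_cancel_right _ _ hY]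

theorem stmt8_general {D : Matrix n n (R × R)} {d : R × R} (hD : D = swapTranspose D)
    (hdet : D.det = d) (hunit : IsUnit d) :
    {C : Matrix n n (R × R) | C = swapTranspose C ∧ C.det = d} =
      {M | ∃ B : Matrix n n (R × R), B.det = 1 ∧ M = B * D * swapTranspose B} := by
  subst hdet
  ext C
  constructor
  · rintro ⟨hC, hdet⟩
    exact exists_det_eq_one_and_eq_mul_mul_swapTranspose hC hD hunit hdet
  · rintro ⟨B, hB, rfl⟩
    exact ⟨mul_mul_swapTranspose_eq_swapTranspose hD B,
      det_mul_mul_swapTranspose_of_det_eq_one hB D⟩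

end PairMatrix

/-- `{C ∈ Herm₂(𝒜) : det C = -1} = {B·diag(-1,1)·B* : B ∈ SL₂(𝒜)}`
(the pseudo-sphere `𝕊^{1,2}` under the identification `ℝ^{2,2} ≅ (Herm₂(𝒜), -det)`). -/
theorem stmt8 :
    {C : M2A | C ∈ Herm2 ∧ C.det = -1} =
      {M : M2A | ∃ B ∈ SL2A, M = B * !![(-1 : LorentzA), 0; 0, 1] * ctrans B} :=
  stmt8_general (by ext i j <;> fin_cases i <;> fin_cases j <;> rfl)
    (by simp [Matrix.det_fin_two_of]) isUnit_one.neg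
end
end

section
/- Let V := {q ∈ ℍ₁ : \widehat{q̄} = −q} = {σi·x₀·1 + x₁I + i·x₂J + x₃K : x₀,…,x₃ ∈ ℝ}, on which H(q,q) = −x₀² + x₁² − x₂² + x₃². For every p ∈ Spin(2,2): (i) p is invertible with p⁻¹ = p̄ and p̂ ∈ Spin(2,2); (ii) for every q ∈ V, p·q·p̂⁻¹ ∈ V; (iii) H(p·q·p̂⁻¹, p·q·p̂⁻¹) = H(q, q) for all q ∈ V. Moreover, the map Φ : Spin(2,2) → GL(V), Φ(p)(q) = p·q·p̂⁻¹, is a group homomorphism whose kernel is exactly {1, −1}. -/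
noncomputable section

/-- `V = {q ∈ ℍ₁ : hat (q̄) = -q} ⊆ ℍ^{𝒜_ℂ}`, a copy of `ℝ^{2,2}`. -/
def Vset : Set HAC := {q | q ∈ H1set ∧ qhat (star q) = -q}

/-- `σi·x₀·1 + x₁·I + i·x₂·J + x₃·K`, the generic element of `V ≅ ℝ^{2,2}`. -/
def mkV (x : Fin 4 → ℝ) : HAC :=
  qscalar (sC * iC * rc (x 0)) + qscalar (rc (x 1)) * qI + qscalar (iC * rc (x 2)) * qJ +
    qscalar (rc (x 3)) * qK

/-!
Write `x°` for the hat of the quaternion conjugate of `x`, an involutive antiautomorphism, so that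
`V` consists of the `q ∈ ℍ₁` with `q° = -q` and `p̂⁻¹ = p°` when `H(p, p) = 1`. Then
`(p q p°)° = p q° p° = -p q p°`. Similarly `ℍ₀` and `ℍ₁` are the `±1` eigenspaces of an antilinear
automorphism `τ` commuting with `°`, so `τ(p q p°) = -p q p°` for `p ∈ ℍ₀`, `q ∈ ℍ₁`. The norm is
multiplicative, which gives the isometry. An element `p` of the kernel satisfies `p q = q p̂` for
all `q ∈ V`: the central unit `q = σi` gives `p̂ = p`, then `q = I, K` force `p` to be a scalar, and
a scalar of square `1` fixed by the hat is `±1`.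
-/

attribute [simps] qscalar qI qJ qK qhat

section Quaternion

variable {R : Type*} [CommRing R]

theorem eq_coe_re_of_commute [IsAddTorsionFree R] {c₁ c₃ : R} (hc₁ : c₁ ∈ nonZeroDivisors R)
    {a : QuaternionAlgebra R c₁ 0 c₃} (hI : Commute a ⟨0, 1, 0, 0⟩)
    (hK : Commute a ⟨0, 0, 0, 1⟩) : a = (a.re : QuaternionAlgebra R c₁ 0 c₃) := by
  have hJ₀ : a.imJ = 0 := by
    simpa [neg_eq_self] using congrArg (·.imK) hI.eq
  have hK₀ : a.imK = 0 := by
    simpa [neg_eq_self, mul_left_mem_nonZeroDivisors_eq_zero_iff hc₁] using congrArg (·.imJ) hI.eq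
  have hI₀ : a.imI = 0 := by
    simpa [self_eq_neg, mul_left_mem_nonZeroDivisors_eq_zero_iff hc₁] using congrArg (·.imJ) hK.eq
  ext <;> simp [hI₀, hJ₀, hK₀]

theorem mul_star_self_of_normSq_eq_one {a : Quaternion R} (ha : Quaternion.normSq a = 1) :
    a * star a = 1 := by
  rw [Quaternion.self_mul_star, ha, Quaternion.coe_one]

theorem star_mul_self_of_normSq_eq_one {a : Quaternion R} (ha : Quaternion.normSq a = 1) :
    star a * a = 1 := by
  rw [Quaternion.star_mul_self, ha, Quaternion.coe_one]

end Quaternion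

theorem Hform_self (q : HAC) : Hform q q = Quaternion.normSq q := by
  rw [Quaternion.normSq_def', Hform]
  ring

theorem qhat_one : qhat 1 = 1 := rfl

theorem qhat_qhat (a : HAC) : qhat (qhat a) = a := rfl

theorem qhat_mul (a b : HAC) : qhat (a * b) = qhat a * qhat b := by
  ext <;> simp [hatC]

theorem qhat_star (a : HAC) : qhat (star a) = star (qhat a) := by
  ext <;> simp [hatC]

theorem Hform_qhat (a b : HAC) : Hform (qhat a) (qhat b) = hatC (Hform a b) := rfl

theorem star_eq_self_iff_exists_toAC {z : AC} : star z = z ↔ ∃ a, z = toAC a := by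
  simp [Prod.ext_iff, toAC, Complex.conj_eq_iff_real]

theorem star_eq_neg_iff_exists_iAC {z : AC} : star z = -z ↔ ∃ a, z = iAC a := by
  constructor
  · intro h
    have hre : z.1.re = 0 ∧ z.2.re = 0 := by
      simpa [Prod.ext_iff, Complex.ext_iff, self_eq_neg] using h
    exact ⟨imEx z, by simp [Prod.ext_iff, Complex.ext_iff, imEx, iAC, hre]⟩
  · rintro ⟨a, rfl⟩
    simp [iAC, Prod.ext_iff]

/-- The antilinear ring automorphism `ζ ↦ J⁻¹ ζᶜ J` of `ℍ^{𝒜_ℂ}`, where `ζᶜ` conjugates the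
coefficients of `ζ` with respect to `i` (`star` on `𝒜_ℂ = ℂ × ℂ`). Its fixed space is `ℍ₀` and its
`-1` eigenspace is `ℍ₁`. -/
@[simps]
def realStructure (ζ : HAC) : HAC := ⟨star ζ.re, -star ζ.imI, star ζ.imJ, -star ζ.imK⟩

theorem realStructure_mul (a b : HAC) :
    realStructure (a * b) = realStructure a * realStructure b := by
  ext1 <;>
    simp only [re_realStructure, imI_realStructure, imJ_realStructure, imK_realStructure,
      Quaternion.re_mul, Quaternion.imI_mul, Quaternion.imJ_mul, Quaternion.imK_mul, star_add,
      star_sub, star_mul'] <;>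
    ring

theorem realStructure_star (a : HAC) : realStructure (star a) = star (realStructure a) := by
  ext <;> simp

theorem realStructure_qhat (a : HAC) : realStructure (qhat a) = qhat (realStructure a) := by
  ext <;> simp [hatC]

theorem mem_H0set_iff {p : HAC} : p ∈ H0set ↔ realStructure p = p := by
  simp [H0set, mk0, Quaternion.ext_iff, star_eq_self_iff_exists_toAC, star_eq_neg_iff_exists_iAC,
    neg_eq_iff_eq_neg]

theorem mem_H1set_iff {q : HAC} : q ∈ H1set ↔ realStructure q = -q := by
  simp [H1set, mk1, Quaternion.ext_iff, star_eq_self_iff_exists_toAC, star_eq_neg_iff_exists_iAC]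

theorem qhat_mem_H0set {p : HAC} (hp : p ∈ H0set) : qhat p ∈ H0set := by
  rw [mem_H0set_iff] at hp ⊢
  rw [realStructure_qhat, hp]

theorem qhat_mem_SpinSet {p : HAC} (hp : p ∈ SpinSet) : qhat p ∈ SpinSet :=
  ⟨qhat_mem_H0set hp.1, by rw [Hform_qhat, hp.2]; rfl⟩

theorem mem_Vset_iff {q : HAC} : q ∈ Vset ↔ realStructure q = -q ∧ qhat (star q) = -q :=
  and_congr_left' mem_H1set_iff

theorem mkV_eq_mk1 (x : Fin 4 → ℝ) :
    mkV x = mk1 (x 0, -x 0) (x 1, x 1) (x 2, x 2) (x 3, x 3) := by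
  ext <;> simp [mkV, mk1, sC, iC, rc, toAC, iAC]

theorem qhat_star_mk1_eq_neg_iff {q₀ q₁ q₂ q₃ : LorentzA} :
    qhat (star (mk1 q₀ q₁ q₂ q₃)) = -mk1 q₀ q₁ q₂ q₃ ↔
      q₀.2 = -q₀.1 ∧ q₁.2 = q₁.1 ∧ q₂.2 = q₂.1 ∧ q₃.2 = q₃.1 := by
  have hswap (a b : ℝ) : b = -a ∧ a = -b ↔ b = -a := by grind
  have hdiag (a b : ℝ) : b = a ∧ a = b ↔ b = a := by grind
  simp [mk1, Quaternion.ext_iff, Prod.ext_iff, Complex.ext_iff, hatC, toAC, iAC, hswap, hdiag]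

theorem Vset_eq_range_mkV : Vset = Set.range mkV := by
  ext q
  constructor
  · rintro ⟨⟨⟨a₀, b₀⟩, ⟨a₁, b₁⟩, ⟨a₂, b₂⟩, ⟨a₃, b₃⟩, rfl⟩, hq⟩
    obtain ⟨rfl : b₀ = -a₀, rfl : b₁ = a₁, rfl : b₂ = a₂, rfl : b₃ = a₃⟩ :=
      qhat_star_mk1_eq_neg_iff.1 hq
    exact ⟨![a₀, b₁, b₂, b₃], mkV_eq_mk1 _⟩
  · rintro ⟨x, rfl⟩
    rw [mkV_eq_mk1]
    exact ⟨⟨_, _, _, _, rfl⟩, qhat_star_mk1_eq_neg_iff.2 ⟨rfl, rfl, rfl, rfl⟩⟩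

theorem Hform_mkV (x : Fin 4 → ℝ) :
    Hform (mkV x) (mkV x) = rc (-(x 0) ^ 2 + (x 1) ^ 2 - (x 2) ^ 2 + (x 3) ^ 2) := by
  ext1 <;> simp [Hform, mkV, sC, iC, rc, ← sq, mul_pow, sub_eq_add_neg]

/-- The twisted conjugation `Φ(p)(q) = p q p̂⁻¹`. The inverse of `p̂` is encoded as the hat of `p̄`,
which is `p̂⁻¹` only when `H(p, p) = 1`. -/
def spinAct (p q : HAC) : HAC := p * q * qhat (star p)

theorem spinAct_mul (p p' q : HAC) : spinAct (p * p') q = spinAct p (spinAct p' q) := by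
  simp only [spinAct, star_mul, qhat_mul, mul_assoc]

-- In term mode because `rw [mul_neg]` fails to match negation on `Quaternion (ℂ × ℂ)`.
theorem spinAct_neg_right (p q : HAC) : spinAct p (-q) = -spinAct p q :=
  (congrArg (· * qhat (star p)) (mul_neg p q)).trans (neg_mul (p * q) _)

theorem spinAct_neg_left (p q : HAC) : spinAct (-p) q = spinAct p q := by
  have hhat : qhat (star (-p)) = -qhat (star p) := congrArg qhat (star_neg p)
  rw [spinAct, hhat]
  exact (congrArg (· * -qhat (star p)) (neg_mul p q)).trans (neg_mul_neg (p * q) _)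

theorem spinAct_one_left (q : HAC) : spinAct 1 q = q := by
  simp [spinAct, qhat_one]

theorem spinAct_mem_Vset {p q : HAC} (hp : p ∈ H0set) (hq : q ∈ Vset) : spinAct p q ∈ Vset := by
  rw [mem_H0set_iff] at hp
  rw [mem_Vset_iff] at hq ⊢
  constructor
  · calc realStructure (spinAct p q) = spinAct (realStructure p) (realStructure q) := by
          simp only [spinAct, realStructure_mul, realStructure_qhat, realStructure_star]
      _ = -spinAct p q := by rw [hp, hq.1, spinAct_neg_right]
  · calc qhat (star (spinAct p q)) = spinAct p (qhat (star q)) := by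
          simp only [spinAct, star_mul, qhat_mul, qhat_star, star_star, qhat_qhat, mul_assoc]
      _ = -spinAct p q := by rw [hq.2, spinAct_neg_right]

theorem Hform_spinAct (p q : HAC) :
    Hform (spinAct p q) (spinAct p q) = Hform p p * hatC (Hform p p) * Hform q q := by
  rw [← Hform_qhat]
  simp only [spinAct, Hform_self, qhat_star, map_mul, Quaternion.normSq_star]
  ring

theorem spinAct_eq_self_iff {p q : HAC} (hp : Hform p p = 1) :
    spinAct p q = q ↔ p * q = q * qhat p := by
  rw [Hform_self] at hp
  have hinv : qhat (star p) * qhat p = 1 := by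
    rw [← qhat_mul, star_mul_self_of_normSq_eq_one hp, qhat_one]
  have hinv' : qhat p * qhat (star p) = 1 := by
    rw [← qhat_mul, mul_star_self_of_normSq_eq_one hp, qhat_one]
  constructor <;> intro h
  · rw [← mul_one (p * q), ← hinv, ← mul_assoc, ← spinAct, h]
  · rw [spinAct, h, mul_assoc, hinv', mul_one]

theorem qI_mem_Vset : qI ∈ Vset :=
  mem_Vset_iff.2 ⟨by ext <;> simp, by ext <;> simp [hatC]⟩

theorem qK_mem_Vset : qK ∈ Vset :=
  mem_Vset_iff.2 ⟨by ext <;> simp, by ext <;> simp [hatC]⟩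

theorem coe_sC_mul_iC_mem_Vset : ((sC * iC : AC) : HAC) ∈ Vset :=
  mem_Vset_iff.2 ⟨by ext <;> simp [sC, iC], by ext <;> simp [hatC, sC, iC]⟩

theorem isUnit_sC_mul_iC : IsUnit (sC * iC) := by
  simp [Prod.isUnit_iff, sC, iC]

theorem eq_one_or_eq_neg_one_of_hatC_eq_self {z : AC} (hz : hatC z = z) (hsq : z ^ 2 = 1) :
    z = 1 ∨ z = -1 := by
  have h21 : z.2 = z.1 := congrArg Prod.fst hz
  have h1 : z.1 = 1 ∨ z.1 = -1 := sq_eq_one_iff.1 (congrArg Prod.fst hsq)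
  exact h1.imp (fun h ↦ Prod.ext h (h21.trans h)) fun h ↦ Prod.ext h (h21.trans h)

theorem spinAct_eq_self_on_Vset_iff {p : HAC} (hp : Hform p p = 1) :
    (∀ q ∈ Vset, spinAct p q = q) ↔ p = 1 ∨ p = -1 := by
  constructor
  · intro h
    have hcomm : ∀ q ∈ Vset, p * q = q * qhat p := fun q hq ↦ (spinAct_eq_self_iff hp).1 (h q hq)
    have hhat : qhat p = p := by
      have hσi := hcomm _ coe_sC_mul_iC_mem_Vset
      rw [Quaternion.mul_coe_eq_smul, Quaternion.coe_mul_eq_smul] at hσi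
      exact (isUnit_sC_mul_iC.smul_left_cancel.1 hσi).symm
    rw [hhat] at hcomm
    have hscalar : p = (p.re : HAC) :=
      eq_coe_re_of_commute isUnit_one.neg.mem_nonZeroDivisors
        (hcomm qI qI_mem_Vset) (hcomm qK qK_mem_Vset)
    have hsq : p.re ^ 2 = 1 := by
      rw [Hform_self, hscalar, Quaternion.normSq_coe] at hp
      exact hp
    rw [hscalar]
    rcases eq_one_or_eq_neg_one_of_hatC_eq_self (congrArg (·.re) hhat) hsq with hre | hre
    · left; rw [hre, Quaternion.coe_one]
    · right; rw [hre, Quaternion.coe_neg, Quaternion.coe_one]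
  · rintro (rfl | rfl) q -
    · exact spinAct_one_left q
    · rw [spinAct_neg_left, spinAct_one_left]

theorem stmt10_general :
    Vset = Set.range mkV ∧
    (∀ x : Fin 4 → ℝ,
      Hform (mkV x) (mkV x) = rc (-(x 0) ^ 2 + (x 1) ^ 2 - (x 2) ^ 2 + (x 3) ^ 2)) ∧
    (∀ p, Hform p p = 1 → p * star p = 1 ∧ star p * p = 1) ∧
    (∀ p ∈ SpinSet, qhat p ∈ SpinSet) ∧
    (∀ p ∈ H0set, ∀ q ∈ Vset, spinAct p q ∈ Vset) ∧
    (∀ p, Hform p p = 1 → ∀ q, Hform (spinAct p q) (spinAct p q) = Hform q q) ∧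
    (∀ p p' q, spinAct (p * p') q = spinAct p (spinAct p' q)) ∧
    (∀ p, Hform p p = 1 → ((∀ q ∈ Vset, spinAct p q = q) ↔ p = 1 ∨ p = -1)) := by
  refine ⟨Vset_eq_range_mkV, Hform_mkV, fun p hp ↦ ?_, fun p ↦ qhat_mem_SpinSet,
    fun p hp q ↦ spinAct_mem_Vset hp, fun p hp q ↦ ?_, spinAct_mul,
    fun p ↦ spinAct_eq_self_on_Vset_iff⟩
  · rw [Hform_self] at hp
    exact ⟨mul_star_self_of_normSq_eq_one hp, star_mul_self_of_normSq_eq_one hp⟩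
  · calc Hform (spinAct p q) (spinAct p q) = 1 * hatC 1 * Hform q q := by rw [Hform_spinAct, hp]
      _ = Hform q q := by rw [show hatC 1 = 1 from rfl, one_mul, one_mul]

/-- `V = {σi·x₀·1 + x₁I + ix₂J + x₃K : xᵢ ∈ ℝ}`, on which
`H(q,q) = -x₀² + x₁² - x₂² + x₃²`.  For every `p ∈ Spin(2,2)`: (i) `p` is invertible with
`p⁻¹ = p̄`, and `p̂ ∈ Spin(2,2)`; (ii) `p·q·p̂⁻¹ ∈ V` for every `q ∈ V` (here
`p̂⁻¹ = hat (p̄)`); (iii) `H(p·q·p̂⁻¹, p·q·p̂⁻¹) = H(q,q)`.  Moreover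
`Φ : p ↦ (q ↦ p·q·p̂⁻¹)` is multiplicative on `Spin(2,2)` and its kernel is `{1, -1}`. -/
theorem stmt10 :
    Vset = Set.range mkV ∧
    (∀ x : Fin 4 → ℝ,
      Hform (mkV x) (mkV x) = rc (-(x 0) ^ 2 + (x 1) ^ 2 - (x 2) ^ 2 + (x 3) ^ 2)) ∧
    (∀ p ∈ SpinSet, p * star p = 1 ∧ star p * p = 1 ∧ qhat p ∈ SpinSet) ∧
    (∀ p ∈ SpinSet, ∀ q ∈ Vset, p * q * qhat (star p) ∈ Vset ∧
      Hform (p * q * qhat (star p)) (p * q * qhat (star p)) = Hform q q) ∧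
    (∀ p ∈ SpinSet, ∀ p' ∈ SpinSet, ∀ q ∈ Vset,
      (p * p') * q * qhat (star (p * p')) = p * (p' * q * qhat (star p')) * qhat (star p)) ∧
    (∀ p ∈ SpinSet, (∀ q ∈ Vset, p * q * qhat (star p) = q) ↔ (p = 1 ∨ p = -1)) := by
  obtain ⟨hV, hH, hinv, hhat, hact, hnorm, hmul, hker⟩ := stmt10_general
  exact ⟨hV, hH, fun p hp ↦ ⟨(hinv p hp.2).1, (hinv p hp.2).2, hhat p hp⟩,
    fun p hp q hq ↦ ⟨hact p hp.1 q hq, hnorm p hp.2 q⟩, fun p _ p' _ q _ ↦ hmul p p' q,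
    fun p hp ↦ hker p hp.2⟩
end
end
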